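/- arXiv:2412.19485 — 2 statements merged into one kernel-verified Lean document; each statement's English description precedes it below -/
import Mathlib

section
/- Let S be a factorizable inverse monoid with zero, with semilattice of idempotents E and group of units G, such that the natural connection θ is a dual isomorphism from E onto a sublattice of L(G). Let E_sc (resp. E_c) denote the partially ordered set of all subcentral (resp. central) idempotents of S under the natural order. Then S has a composition subcentral (resp. composition central) idempotent series if and only if E_sc (resp. E_c) satisfies both the ascending chain condition and the descending chain condition. -/
/-- An inverse monoid: a monoid in which every element `a` has an inverse `a⁻¹`
satisfying `a * a⁻¹ * a = a` and `a⁻¹ * a * a⁻¹ = a⁻¹`, and this inverse is unique. -/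
class InverseMonoid (S : Type*) extends Monoid S, Inv S where
  mul_inv_mul : ∀ a : S, a * a⁻¹ * a = a
  inv_mul_inv : ∀ a : S, a⁻¹ * a * a⁻¹ = a⁻¹
  inv_unique : ∀ a b : S, a * b * a = a → b * a * b = b → b = a⁻¹

/-- An inverse monoid with a (two-sided absorbing) zero element. -/
class InverseMonoidWithZero (S : Type*) extends InverseMonoid S, Zero S where
  zero_mul : ∀ a : S, 0 * a = 0
  mul_zero : ∀ a : S, a * 0 = 0

/-- The natural partial order on an inverse monoid: `a ≤ b` iff `a = e * b`
for some idempotent `e`. -/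
def NatLe {S : Type*} [Monoid S] (a b : S) : Prop :=
  ∃ e : S, IsIdempotentElem e ∧ a = e * b

/-- The filter `e↑ = {s | e ≤ s}` generated by `e`. -/
def upfilter {S : Type*} [Monoid S] (e : S) : Set S := {s | NatLe e s}

/-- `c` is central in (a subset) `T`: it belongs to `T` and commutes with all elements of `T`. -/
def CentralIn {S : Type*} [Mul S] (T : Set S) (c : S) : Prop :=
  c ∈ T ∧ ∀ s ∈ T, c * s = s * c

/-- A monoid is factorizable if every element is a product of an idempotent and a unit. -/
def Factorizable (S : Type*) [Monoid S] : Prop :=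
  ∀ s : S, ∃ e g : S, IsIdempotentElem e ∧ IsUnit g ∧ s = e * g

/-- The natural connection `θ`: for an (idempotent) `e`, the subgroup
`eθ = {g ∈ G : e * g = e}` of the group of units. -/
def natconn {S : Type*} [Monoid S] (e : S) : Subgroup Sˣ where
  carrier := {g : Sˣ | e * (g : S) = e}
  one_mem' := by simp
  mul_mem' := by
    intro a b ha hb
    simp only [Set.mem_setOf_eq, Units.val_mul] at *
    rw [← mul_assoc, ha, hb]
  inv_mem' := by
    intro a ha
    simp only [Set.mem_setOf_eq] at *
    nth_rewrite 1 [← ha]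
    rw [mul_assoc, ← Units.val_mul, mul_inv_cancel, Units.val_one, mul_one]

/-- The natural connection is a dual isomorphism from the idempotents onto a
sublattice of the lattice of subgroups of the group of units: it is injective on
idempotents, order-reversing in both directions, and its image is closed under
joins and meets of subgroups. -/
def NatconnDualIso (S : Type*) [Monoid S] : Prop :=
  (∀ e f : S, IsIdempotentElem e → IsIdempotentElem f → natconn e = natconn f → e = f) ∧
  (∀ e f : S, IsIdempotentElem e → IsIdempotentElem f →
    (NatLe e f ↔ natconn f ≤ natconn e)) ∧
  (∀ e f : S, IsIdempotentElem e → IsIdempotentElem f →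
    (∃ h : S, IsIdempotentElem h ∧ natconn h = natconn e ⊔ natconn f) ∧
    (∃ h : S, IsIdempotentElem h ∧ natconn h = natconn e ⊓ natconn f))

/-- `j` is the join (least upper bound) of `e` and `f` with respect to the natural order. -/
def IsNatJoin {S : Type*} [Monoid S] (e f j : S) : Prop :=
  NatLe e j ∧ NatLe f j ∧ ∀ x : S, NatLe e x → NatLe f x → NatLe j x

/-- `F_{e,f} = f · e↑`. -/
def Fef {S : Type*} [Monoid S] (e f : S) : Set S := (f * ·) '' upfilter e

/-- `UF_{e,f}`: the group of units of the monoid `F_{e,f}` (whose identity is `f`). -/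
def UFef {S : Type*} [Monoid S] (e f : S) : Set S :=
  {x ∈ Fef e f | ∃ y ∈ Fef e f, x * y = f ∧ y * x = f}

/-- The centre of a subset `T`. -/
def ZIn {S : Type*} [Mul S] (T : Set S) : Set S := {x ∈ T | ∀ y ∈ T, x * y = y * x}

/-- Two subsets are isomorphic as semigroups (with the induced multiplication). -/
def SubIso {S : Type*} [Mul S] (A B : Set S) : Prop :=
  ∃ φ : S → S, Set.BijOn φ A B ∧ ∀ a ∈ A, ∀ b ∈ A, φ (a * b) = φ a * φ b

/-- A subcentral idempotent series between `0` and `a`. -/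
def IsSubcentralSeriesBetween {S : Type*} [Monoid S] [Zero S] (n : ℕ) (c : ℕ → S) (a : S) :
    Prop :=
  c 0 = 0 ∧ c n = a ∧ (∀ i ≤ n, IsIdempotentElem (c i)) ∧
    ∀ i < n, CentralIn (upfilter (c i)) (c (i + 1))

/-- A subcentral idempotent series of `S` (between `0` and `1`). -/
def IsSubcentralSeries {S : Type*} [Monoid S] [Zero S] (n : ℕ) (c : ℕ → S) : Prop :=
  IsSubcentralSeriesBetween n c 1

/-- A central idempotent series of `S`. -/
def IsCentralSeries {S : Type*} [Monoid S] [Zero S] (n : ℕ) (c : ℕ → S) : Prop :=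
  c 0 = 0 ∧ c n = 1 ∧ (∀ i ≤ n, IsIdempotentElem (c i)) ∧
    (∀ i < n, NatLe (c i) (c (i + 1))) ∧
    ∀ i < n, CentralIn Set.univ (c (i + 1))

/-- A subcentral idempotent: one occurring in some subcentral idempotent series of `S`. -/
def IsSubcentralIdem {S : Type*} [Monoid S] [Zero S] (e : S) : Prop :=
  ∃ (n : ℕ) (c : ℕ → S), IsSubcentralSeries n c ∧ ∃ i ≤ n, c i = e

/-- A `G`-nilpotent series: a chain of central idempotents from `0` to `1` with
`F_{eᵢ,eᵢ₊₁} ⊆ Z(F_{0,eᵢ₊₁})`. -/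
def GNilpotentSeries {S : Type*} [Monoid S] [Zero S] (n : ℕ) (c : ℕ → S) : Prop :=
  c 0 = 0 ∧ c n = 1 ∧ (∀ i ≤ n, IsIdempotentElem (c i) ∧ CentralIn Set.univ (c i)) ∧
    (∀ i < n, NatLe (c i) (c (i + 1))) ∧
    ∀ i < n, Fef (c i) (c (i + 1)) ⊆ ZIn (Fef 0 (c (i + 1)))

/-- A `G`-solvable series: a chain of central idempotents from `0` to `1` with
each `F_{eᵢ,eᵢ₊₁}` commutative. -/
def GSolvableSeries {S : Type*} [Monoid S] [Zero S] (n : ℕ) (c : ℕ → S) : Prop :=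
  c 0 = 0 ∧ c n = 1 ∧ (∀ i ≤ n, IsIdempotentElem (c i) ∧ CentralIn Set.univ (c i)) ∧
    (∀ i < n, NatLe (c i) (c (i + 1))) ∧
    ∀ i < n, ∀ x ∈ Fef (c i) (c (i + 1)), ∀ y ∈ Fef (c i) (c (i + 1)), x * y = y * x

/-- `S` is `G`-nilpotent. -/
def GNilpotent (S : Type*) [Monoid S] [Zero S] : Prop :=
  ∃ (n : ℕ) (c : ℕ → S), GNilpotentSeries n c

/-- `S` is `G`-solvable. -/
def GSolvable (S : Type*) [Monoid S] [Zero S] : Prop :=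
  ∃ (n : ℕ) (c : ℕ → S), GSolvableSeries n c

/-- Two idempotent series are isomorphic: same length, and a one-to-one correspondence
between their factors under which corresponding factors are isomorphic. -/
def SeriesIso {S : Type*} [Monoid S] (n : ℕ) (c : ℕ → S) (n' : ℕ) (d : ℕ → S) : Prop :=
  n = n' ∧ ∃ σ : ℕ → ℕ, Set.BijOn σ {i | i < n} {i | i < n'} ∧
    ∀ i < n, SubIso (Fef (c i) (c (i + 1))) (Fef (d (σ i)) (d (σ i + 1)))

/-- A composition series (for a kind `P` of series): it has no repeated terms, and any
refinement of it (of the same kind) only repeats its terms. -/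
def IsCompositionOf {S : Type*} (P : ℕ → (ℕ → S) → Prop) (n : ℕ) (c : ℕ → S) : Prop :=
  P n c ∧ (∀ i ≤ n, ∀ j ≤ n, c i = c j → i = j) ∧
    ∀ (m : ℕ) (d : ℕ → S), P m d → (∀ i ≤ n, ∃ j ≤ m, d j = c i) →
      ∀ j ≤ m, ∃ i ≤ n, d j = c i

/-!
The natural connection turns idempotents of `S` into subgroups of the group of units `G`, reversing
the order, and an idempotent `c` is central in `e↑` exactly when `natconn c` is a subgroup of
`natconn e` normalized by it. So both kinds of series are chains of subgroups, taken from a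
sublattice of `L(G)`, whose steps satisfy a Zassenhaus-type condition and Dedekind's modular law.

A series is a composition series iff each step `b ⟶ b'` is simple. Given such a series, a subnormal
`a` meets each factor in everything or nothing: `a ⊓ b ⊔ b'` is `b` or `b'`. The number of factors
that `a` covers is strictly monotone in `a` by the modular law, and it is bounded by the length, so
both chain conditions hold. Conversely, the descending condition on idempotents makes it possible to
refine a step until it is simple, and the ascending one makes the chain of simple steps stop at `1`.
-/

open Relation Subgroup

section Series

variable {T : Type*} {r : T → T → Prop} {s t u : T} {n m : ℕ} {c d : ℕ → T}

/-- `c 0, …, c n` is a chain of `r`-steps from `s` to `t`; the values of `c` beyond `n` are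
irrelevant. -/
def IsSeriesOf (r : T → T → Prop) (s t : T) (n : ℕ) (c : ℕ → T) : Prop :=
  c 0 = s ∧ c n = t ∧ ∀ i < n, r (c i) (c (i + 1))

/-- A proper `r`-step that cannot be split into two proper `r`-steps: the abstract form of a step
with simple factor. -/
def SimpleStep (r : T → T → Prop) (a b : T) : Prop :=
  r a b ∧ a ≠ b ∧ ∀ x, r a x → r x b → x = a ∨ x = b

namespace IsSeriesOf

theorem reflTransGen_of_le (hc : IsSeriesOf r s t n c) {i j : ℕ} (hij : i ≤ j) (hj : j ≤ n) :
    ReflTransGen r (c i) (c j) := by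
  induction j, hij using Nat.le_induction with
  | base => exact .refl
  | succ j _ ih => exact (ih (by lia)).tail (hc.2.2 j hj)

theorem cons {a : T} (ha : r a s) (hc : IsSeriesOf r s t n c) :
    IsSeriesOf r a t (n + 1) (fun k => k.casesOn a c) := by
  refine ⟨rfl, hc.2.1, ?_⟩
  rintro (_ | i) hi
  · simpa [hc.1] using ha
  · exact hc.2.2 i (by lia)

theorem take (hc : IsSeriesOf r s t n c) {j : ℕ} (hj : j ≤ n) : IsSeriesOf r s (c j) j c :=
  ⟨hc.1, rfl, fun i hi => hc.2.2 i (by lia)⟩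

theorem drop (hc : IsSeriesOf r s t n c) {j : ℕ} (hj : j ≤ n) :
    IsSeriesOf r (c j) t (n - j) (fun k => c (j + k)) :=
  ⟨rfl, by simpa [Nat.add_sub_cancel' hj] using hc.2.1, fun i hi => hc.2.2 (j + i) (by lia)⟩

theorem exists_concat (hc : IsSeriesOf r s t n c) (hd : IsSeriesOf r t u m d) :
    ∃ e, IsSeriesOf r s u (n + m) e ∧ (∀ k ≤ n, e k = c k) ∧ ∀ k, e (n + k) = d k := by
  let e : ℕ → T := fun k => if k ≤ n then c k else d (k - n)
  have left : ∀ k ≤ n, e k = c k := fun k hk => if_pos hk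
  have right : ∀ k, e (n + k) = d k := by
    rintro (_ | k)
    · rw [add_zero, left n le_rfl, hc.2.1, hd.1]
    · simp [e]
  refine ⟨e, ⟨(left 0 (Nat.zero_le n)).trans hc.1, (right m).trans hd.2.1, fun i hi => ?_⟩,
    left, right⟩
  rcases lt_or_ge i n with hin | hin
  · rw [left i hin.le, left (i + 1) hin]
    exact hc.2.2 i hin
  · obtain ⟨k, rfl⟩ := Nat.exists_eq_add_of_le hin
    rw [right, add_assoc, right]
    exact hd.2.2 k (by lia)

end IsSeriesOf

theorem exists_isSeriesOf_iff_reflTransGen :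
    (∃ n c, IsSeriesOf r s t n c) ↔ ReflTransGen r s t := by
  refine ⟨fun ⟨n, c, hc⟩ => ?_, fun h => ?_⟩
  · simpa [hc.1, hc.2.1] using hc.reflTransGen_of_le (Nat.zero_le n) le_rfl
  · induction h using ReflTransGen.head_induction_on with
    | refl => exact ⟨0, fun _ => t, rfl, rfl, fun i hi => absurd hi i.not_lt_zero⟩
    | head hab _ ih =>
      obtain ⟨n, c, hc⟩ := ih
      exact ⟨n + 1, _, hc.cons hab⟩

theorem exists_isSeriesOf_through_iff {x : T} :
    (∃ n c, IsSeriesOf r s t n c ∧ ∃ i ≤ n, c i = x) ↔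
      ReflTransGen r s x ∧ ReflTransGen r x t := by
  constructor
  · rintro ⟨n, c, hc, i, hi, rfl⟩
    exact ⟨exists_isSeriesOf_iff_reflTransGen.1 ⟨i, c, hc.take hi⟩,
      exists_isSeriesOf_iff_reflTransGen.1 ⟨n - i, _, hc.drop hi⟩⟩
  · rintro ⟨hsx, hxt⟩
    obtain ⟨n, c, hc⟩ := exists_isSeriesOf_iff_reflTransGen.2 hsx
    obtain ⟨m, d, hd⟩ := exists_isSeriesOf_iff_reflTransGen.2 hxt
    obtain ⟨e, he, hec, -⟩ := hc.exists_concat hd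
    exact ⟨n + m, e, he, n, by lia, (hec n le_rfl).trans hc.2.1⟩

section Antisymm

variable (hanti : ∀ a b, ReflTransGen r a b → ReflTransGen r b a → a = b)

include hanti

theorem IsSeriesOf.simpleStep_of_isCompositionOf (hc : IsCompositionOf (IsSeriesOf r s t) n c) :
    IsSeriesOf (SimpleStep r) s t n c := by
  obtain ⟨hs, hinj, hmax⟩ := hc
  refine ⟨hs.1, hs.2.1, fun j hj => ⟨hs.2.2 j hj, fun heq => ?_, fun x hjx hxj => ?_⟩⟩
  · exact absurd (hinj j hj.le (j + 1) hj heq) (by lia)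
  obtain ⟨d, hd, hleft, hright⟩ :=
    (hs.take hj.le).exists_concat (((hs.drop (j := j + 1) hj).cons hxj).cons hjx)
  have refines : ∀ i ≤ n, ∃ k ≤ j + (n - (j + 1) + 1 + 1), d k = c i := fun i hi => by
    rcases le_or_gt i j with hij | hij
    · exact ⟨i, by lia, hleft i hij⟩
    · obtain ⟨k, rfl⟩ := Nat.exists_eq_add_of_le (Nat.succ_le_of_lt hij)
      exact ⟨j + (k + 2), by lia, hright (k + 2)⟩
  obtain ⟨k, hk, hkx⟩ := hmax _ d hd refines (j + 1) (by lia)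
  obtain rfl : x = c k := (hright 1).symm.trans hkx
  rcases le_or_gt k j with hkj | hkj
  · exact .inl (hanti _ _ (hs.reflTransGen_of_le hkj hj.le) (.single hjx))
  · exact .inr (hanti _ _ (.single hxj) (hs.reflTransGen_of_le hkj hk))

theorem IsSeriesOf.injOn_of_simpleStep (hc : IsSeriesOf (SimpleStep r) s t n c) :
    ∀ i ≤ n, ∀ j ≤ n, c i = c j → i = j := by
  have hs : IsSeriesOf r s t n c := ⟨hc.1, hc.2.1, fun i hi => (hc.2.2 i hi).1⟩
  have ne_of_lt : ∀ i j, i < j → j ≤ n → c i ≠ c j := fun i j hij hj heq =>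
    (hc.2.2 i (by lia)).2.1 (hanti _ _ (.single (hs.2.2 i (by lia)))
      (heq ▸ hs.reflTransGen_of_le hij hj))
  intro i hi j hj heq
  rcases lt_trichotomy i j with hij | hij | hij
  · exact absurd heq (ne_of_lt i j hij hj)
  · exact hij
  · exact absurd heq.symm (ne_of_lt j i hij hi)

variable (hmid : ∀ a b c, r a b → r a c → ReflTransGen r b c → r b c)

include hmid

theorem IsSeriesOf.isCompositionOf_of_simpleStep (hc : IsSeriesOf (SimpleStep r) s t n c) :
    IsCompositionOf (IsSeriesOf r s t) n c := by
  have hs : IsSeriesOf r s t n c := ⟨hc.1, hc.2.1, fun i hi => (hc.2.2 i hi).1⟩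
  refine ⟨hs, hc.injOn_of_simpleStep hanti, fun m d hd refines j => ?_⟩
  induction j with
  | zero => exact fun _ => ⟨0, Nat.zero_le n, hd.1.trans hs.1.symm⟩
  | succ j ih =>
    intro hj
    obtain ⟨i, hi, hji⟩ := ih (by lia)
    have step : r (c i) (d (j + 1)) := hji ▸ hd.2.2 j hj
    by_cases heq : d (j + 1) = c i
    · exact ⟨i, hi, heq⟩
    rcases hi.eq_or_lt with rfl | hin
    · have : ReflTransGen r (d (j + 1)) (c i) := by
        simpa [hs.2.1, hd.2.1] using hd.reflTransGen_of_le hj le_rfl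
      exact absurd (hanti _ _ this (.single step)) heq
    · obtain ⟨cstep, cne, csimple⟩ := hc.2.2 i hin
      obtain ⟨q, hq, hqi⟩ := refines (i + 1) hin
      have hjq : j < q := by
        by_contra! hqj
        have := hd.reflTransGen_of_le hqj (by lia)
        rw [hqi, hji] at this
        exact cne (hanti _ _ (.single cstep) this)
      have := hqi ▸ hd.reflTransGen_of_le (Nat.succ_le_of_lt hjq) hq
      rcases csimple _ step (hmid _ _ _ step cstep this) with h | h
      · exact ⟨i, hi, h⟩
      · exact ⟨i + 1, hin, h⟩

theorem exists_isCompositionOf_isSeriesOf_iff :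
    (∃ n c, IsCompositionOf (IsSeriesOf r s t) n c) ↔ ReflTransGen (SimpleStep r) s t := by
  rw [← exists_isSeriesOf_iff_reflTransGen]
  exact ⟨fun ⟨n, c, hc⟩ => ⟨n, c, IsSeriesOf.simpleStep_of_isCompositionOf hanti hc⟩,
    fun ⟨n, c, hc⟩ => ⟨n, c, hc.isCompositionOf_of_simpleStep hanti hmid⟩⟩

end Antisymm

theorem wellFoundedOn_iff_not_exists_seq {X : Set T} :
    X.WellFoundedOn r ↔ ¬ ∃ f : ℕ → T, (∀ k, f k ∈ X) ∧ ∀ k, r (f (k + 1)) (f k) := by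
  rw [Set.WellFoundedOn, wellFounded_iff_isEmpty_descending_chain]
  exact ⟨fun ⟨h⟩ ⟨f, hX, hf⟩ => h ⟨fun k => ⟨f k, hX k⟩, hf⟩,
    fun h => ⟨fun ⟨f, hf⟩ => h ⟨fun k => f k, fun k => (f k).2, hf⟩⟩⟩

end Series

section Map

variable {T L : Type*} {φ : T → L} {X : Set T} {r : T → T → Prop}
  (hφ : X.InjOn φ) (hr : ∀ a b, r a b → a ∈ X ∧ b ∈ X)

include hφ hr

theorem map_apply_apply_of_injOn {a b : T} (ha : a ∈ X) (hb : b ∈ X) :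
    Relation.Map r φ φ (φ a) (φ b) ↔ r a b := by
  refine ⟨?_, fun h => ⟨a, b, h, rfl, rfl⟩⟩
  rintro ⟨a', b', h, haa', hbb'⟩
  rwa [← hφ (hr _ _ h).1 ha haa', ← hφ (hr _ _ h).2 hb hbb']

theorem reflTransGen_map_iff_of_injOn {a : T} {y : L} (ha : a ∈ X) :
    ReflTransGen (Relation.Map r φ φ) (φ a) y ↔ ∃ b ∈ X, ReflTransGen r a b ∧ φ b = y := by
  constructor
  · intro h
    induction h with
    | refl => exact ⟨a, ha, .refl, rfl⟩
    | tail _ hstep ih =>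
      obtain ⟨b, hb, hab, rfl⟩ := ih
      obtain ⟨b', c, hbc, hbb', rfl⟩ := hstep
      obtain rfl := hφ (hr _ _ hbc).1 hb hbb'
      exact ⟨c, (hr _ _ hbc).2, hab.tail hbc, rfl⟩
  · rintro ⟨b, -, hab, rfl⟩
    exact hab.lift φ (le_onFun_map φ)

theorem simpleStep_map_of_injOn :
    SimpleStep (Relation.Map r φ φ) = Relation.Map (SimpleStep r) φ φ := by
  ext A B
  constructor
  · rintro ⟨⟨a, b, hab, rfl, rfl⟩, hne, hsimple⟩
    refine ⟨a, b, ⟨hab, fun h => hne (congrArg φ h), fun x hax hxb => ?_⟩, rfl, rfl⟩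
    exact (hsimple (φ x) ⟨a, x, hax, rfl, rfl⟩ ⟨x, b, hxb, rfl, rfl⟩).imp
      (hφ (hr _ _ hax).2 (hr _ _ hab).1) (hφ (hr _ _ hax).2 (hr _ _ hab).2)
  · rintro ⟨a, b, ⟨hab, hne, hsimple⟩, rfl, rfl⟩
    obtain ⟨ha, hb⟩ := hr _ _ hab
    refine ⟨⟨a, b, hab, rfl, rfl⟩, fun h => hne (hφ ha hb h), ?_⟩
    rintro _ ⟨a', x, hax, haa', rfl⟩ hxb
    obtain rfl := hφ (hr _ _ hax).1 ha haa'
    rw [map_apply_apply_of_injOn hφ hr (hr _ _ hax).2 hb] at hxb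
    exact (hsimple x hax hxb).imp (congrArg φ) (congrArg φ)

end Map

section NormalityRel

variable {L : Type*} [Lattice L] [BoundedOrder L] {R : L → L → Prop}

/-- `a` is reached from `⊤` by finitely many `R`-steps; when `R` is normality of subgroups, these
are the subnormal subgroups. -/
def Subnormal (R : L → L → Prop) (a : L) : Prop :=
  ReflTransGen R ⊤ a

theorem mem_and_subnormal_of_subnormal_restrict {K : Set L} (htop : ⊤ ∈ K) {a : L}
    (ha : Subnormal (fun a b => a ∈ K ∧ b ∈ K ∧ R a b) a) : a ∈ K ∧ Subnormal R a := by
  induction ha with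
  | refl => exact ⟨htop, .refl⟩
  | tail _ hstep ih => exact ⟨hstep.2.1, ih.2.tail hstep.2.2⟩

/-- An abstract normality relation on a bounded lattice: `R a b` is to be read as "`b` is normal in
`a`". The axioms are those properties of normality of subgroups on which the Zassenhaus lemma and
the theory of composition series rest. -/
structure IsNormalityRel (R : L → L → Prop) : Prop where
  le {a b} : R a b → b ≤ a
  bot {a} : Subnormal R a → R a ⊥
  of_le {a b c} : R a b → R a c → c ≤ b → R b c
  inf {a a' b} : Subnormal R b → R a a' → R (a ⊓ b) (a' ⊓ b)
  sup {b b' c c'} : R b b' → R c c' → c ≤ b → R (c ⊔ b') (c' ⊔ b')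
  dedekind {b b' x y} : R b b' → x ≤ b → x ≤ y → (x ⊔ b') ⊓ y ≤ x ⊔ b' ⊓ y

namespace IsNormalityRel

variable {a b b' c e f : L}

theorem restrict (h : IsNormalityRel R) (K : Sublattice L) (hbot : ⊥ ∈ K) (htop : ⊤ ∈ K) :
    IsNormalityRel fun a b => a ∈ K ∧ b ∈ K ∧ R a b where
  le hab := h.le hab.2.2
  bot ha :=
    have ⟨haK, haR⟩ := mem_and_subnormal_of_subnormal_restrict htop ha
    ⟨haK, hbot, h.bot haR⟩
  of_le hab hac hcb := ⟨hab.2.1, hac.2.1, h.of_le hab.2.2 hac.2.2 hcb⟩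
  inf hb ha :=
    have ⟨hbK, hbR⟩ := mem_and_subnormal_of_subnormal_restrict htop hb
    ⟨K.infClosed ha.1 hbK, K.infClosed ha.2.1 hbK, h.inf hbR ha.2.2⟩
  sup hb hc hcb := ⟨K.supClosed hc.1 hb.2.1, K.supClosed hc.2.1 hb.2.1,
    h.sup hb.2.2 hc.2.2 hcb⟩
  dedekind hb := h.dedekind hb.2.2

theorem zassenhaus (h : IsNormalityRel R) (hb : Subnormal R b) (hbb' : R b b') (hac : R a c) :
    R (a ⊓ b ⊔ b') (c ⊓ b ⊔ b') :=
  h.sup hbb' (h.inf hb hac) inf_le_right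

theorem inf_sup_eq_or_eq (h : IsNormalityRel R) (hb : Subnormal R b) (hbb' : SimpleStep R b b')
    (ha : Subnormal R a) : a ⊓ b ⊔ b' = b ∨ a ⊓ b ⊔ b' = b' := by
  induction ha with
  | refl => exact .inl (by simpa using h.le hbb'.1)
  | @tail a c _ hac ih =>
    rcases ih with hfull | hempty
    · have hstep := h.zassenhaus hb hbb'.1 hac
      rw [hfull] at hstep
      exact hbb'.2.2 _ hstep (h.of_le hstep hbb'.1 le_sup_right)
    · refine .inr (le_antisymm ?_ le_sup_right)
      calc c ⊓ b ⊔ b' ≤ a ⊓ b ⊔ b' := by gcongr; exact h.le hac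
        _ = b' := hempty

theorem inf_le_of_inf_sup_le (h : IsNormalityRel R) (hbb' : R b b') (hef : e ≤ f)
    (hlower : f ⊓ b' ≤ e) (hfactor : f ⊓ b ≤ e ⊓ b ⊔ b') : f ⊓ b ≤ e :=
  calc f ⊓ b ≤ (e ⊓ b ⊔ b') ⊓ f := le_inf hfactor inf_le_left
    _ ≤ e ⊓ b ⊔ b' ⊓ f := h.dedekind hbb' inf_le_right (inf_le_left.trans hef)
    _ ≤ e := sup_le inf_le_left (inf_comm b' f ▸ hlower)

/-- `ρ a` counts the factors of the composition series below `b` that are covered by `a`. -/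
theorem exists_rank_of_simpleStep (h : IsNormalityRel R) (hb : Subnormal R b)
    (hchain : ReflTransGen (SimpleStep R) b ⊥) :
    ∃ (ρ : L → ℕ) (N : ℕ), Monotone ρ ∧ (∀ a, ρ a ≤ N) ∧
      ∀ e f, Subnormal R f → e ≤ f → ρ f ≤ ρ e → f ⊓ b ≤ e := by
  classical
  induction hchain using ReflTransGen.head_induction_on with
  | refl => exact ⟨fun _ => 0, 0, monotone_const, fun _ => le_rfl, by simp⟩
  | @head b b' hbb' _ ih =>
    obtain ⟨ρ, N, hmono, hbound, hρ⟩ := ih (hb.tail hbb'.1)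
    let covers : L → ℕ := fun a => if b ≤ a ⊓ b ⊔ b' then 1 else 0
    have covers_mono : Monotone covers := fun e f hef => by
      have : b ≤ e ⊓ b ⊔ b' → b ≤ f ⊓ b ⊔ b' := fun he => he.trans (by gcongr)
      grind
    refine ⟨fun a => ρ a + covers a, N + 1, hmono.add covers_mono,
      fun a => add_le_add (hbound a) (by grind), fun e f hf hef hle => ?_⟩
    have hρle := hmono hef
    have hcle := covers_mono hef
    refine h.inf_le_of_inf_sup_le hbb'.1 hef (hρ e f hf hef (by lia)) ?_
    rcases h.inf_sup_eq_or_eq hb hbb' hf with hfull | hempty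
    · have he : b ≤ e ⊓ b ⊔ b' := by grind
      exact inf_le_right.trans he
    · calc f ⊓ b ≤ f ⊓ b ⊔ b' := le_sup_left
        _ = b' := hempty
        _ ≤ e ⊓ b ⊔ b' := le_sup_right

theorem wellFoundedOn_of_simpleStep (h : IsNormalityRel R)
    (hchain : ReflTransGen (SimpleStep R) ⊤ ⊥) :
    {a | Subnormal R a}.WellFoundedOn (· < ·) ∧ {a | Subnormal R a}.WellFoundedOn (· > ·) := by
  obtain ⟨ρ, N, -, hbound, hρ⟩ := h.exists_rank_of_simpleStep .refl hchain
  have rank_lt : ∀ e f, Subnormal R f → e < f → ρ e < ρ f := fun e f hf hef => by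
    by_contra! hle
    exact hef.not_ge (by simpa using hρ e f hf hef.le hle)
  refine ⟨(measure ρ).wf.wellFoundedOn.mono' fun e _ f hf => rank_lt e f hf,
    (measure (N - ρ ·)).wf.wellFoundedOn.mono' fun e he f _ hfe => ?_⟩
  have := rank_lt f e he hfe
  have := hbound e
  change N - ρ e < N - ρ f
  lia

theorem exists_simpleStep (h : IsNormalityRel R)
    (hdesc : {a | Subnormal R a}.WellFoundedOn (· > ·)) (ha : Subnormal R a) (hne : a ≠ ⊥) :
    ∃ b, Subnormal R b ∧ SimpleStep R a b := by
  obtain ⟨⟨b, hb⟩, ⟨hab, hba⟩, hmax⟩ := WellFounded.has_min hdesc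
    {b | R a b.1 ∧ b.1 ≠ a} ⟨⟨⊥, ha.tail (h.bot ha)⟩, h.bot ha, hne.symm⟩
  refine ⟨b, hb, hab, hba.symm, fun x hax hxb => or_iff_not_imp_left.2 fun hxa => ?_⟩
  by_contra hxb'
  exact hmax ⟨x, ha.tail hax⟩ ⟨hax, hxa⟩ ((h.le hxb).lt_of_ne' hxb')

theorem reflTransGen_simpleStep_bot (h : IsNormalityRel R)
    (hasc : {a | Subnormal R a}.WellFoundedOn (· < ·))
    (hdesc : {a | Subnormal R a}.WellFoundedOn (· > ·)) (ha : Subnormal R a) :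
    ReflTransGen (SimpleStep R) a ⊥ := by
  refine hasc.induction (P := (ReflTransGen (SimpleStep R) · ⊥)) ha fun a ha ih => ?_
  by_cases hbot : a = ⊥
  · exact hbot ▸ .refl
  · obtain ⟨b, hb, hab⟩ := h.exists_simpleStep hdesc ha hbot
    exact .head hab (ih b hb ((h.le hab.1).lt_of_ne' hab.2.1))

theorem reflTransGen_simpleStep_iff (h : IsNormalityRel R) :
    ReflTransGen (SimpleStep R) ⊤ ⊥ ↔
      {a | Subnormal R a}.WellFoundedOn (· < ·) ∧ {a | Subnormal R a}.WellFoundedOn (· > ·) :=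
  ⟨h.wellFoundedOn_of_simpleStep, fun ⟨hasc, hdesc⟩ =>
    h.reflTransGen_simpleStep_bot hasc hdesc .refl⟩

end IsNormalityRel

end NormalityRel

section Subgroups

variable {G : Type*} [Group G]

/-- `B` is a normal subgroup of the subgroup `A`. -/
def NormalIn (A B : Subgroup G) : Prop :=
  B ≤ A ∧ A ≤ normalizer B

/-- `B` is a subgroup of `A` that is normal in the whole group, as in a chief series. Nothing is
required of `A`, which in a chain from `⊤` is normal as well. -/
def NormalBelow (A B : Subgroup G) : Prop :=
  B ≤ A ∧ B.Normal

theorem sup_inf_le_of_le_normalizer {A B C : Subgroup G} (hAB : A ≤ normalizer B) (hAC : A ≤ C) :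
    (A ⊔ B) ⊓ C ≤ A ⊔ B ⊓ C := by
  rw [← SetLike.coe_subset_coe, coe_inf, coe_mul_of_left_le_normalizer_right A B hAB,
    ← mul_inf_assoc A B C hAC]
  exact Set.mul_subset_iff.2 fun a ha b hb => mul_mem_sup ha hb

theorem isNormalityRel_normalIn : IsNormalityRel (NormalIn (G := G)) where
  le h := h.1
  bot _ := ⟨bot_le, le_normalizer_of_normal⟩
  of_le hab hac hcb := ⟨hcb, hab.1.trans hac.2⟩
  inf {_ _ _} _ h := ⟨inf_le_inf_right _ h.1,
    (inf_le_inf h.2 le_normalizer).trans inf_normalizer_le_normalizer_inf⟩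
  sup {_ B' _ C'} hB hC hCB := ⟨sup_le_sup_right hC.1 _, sup_le
    ((le_inf hC.2 (hCB.trans hB.2)).trans (normalizer_inf_normalizer_le_normalizer_sup C' B'))
    (le_sup_right.trans le_normalizer)⟩
  dedekind hb hxb hxy := sup_inf_le_of_le_normalizer (hxb.trans hb.2) hxy

theorem normal_of_subnormal_normalBelow {A : Subgroup G} (h : Subnormal NormalBelow A) :
    A.Normal := by
  rcases ReflTransGen.cases_tail h with rfl | ⟨_, -, hstep⟩
  exacts [inferInstance, hstep.2]

theorem isNormalityRel_normalBelow : IsNormalityRel (NormalBelow (G := G)) where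
  le h := h.1
  bot _ := ⟨bot_le, inferInstance⟩
  of_le _ hac hcb := ⟨hcb, hac.2⟩
  inf hb h :=
    have := normal_of_subnormal_normalBelow hb
    have := h.2
    ⟨inf_le_inf_right _ h.1, inferInstance⟩
  sup hb hc _ :=
    have := hb.2
    have := hc.2
    ⟨sup_le_sup_right hc.1 _, inferInstance⟩
  dedekind hb _ hxy :=
    have := hb.2
    sup_inf_le_of_le_normalizer le_normalizer_of_normal hxy

end Subgroups

namespace InverseMonoid

variable {S : Type*} [InverseMonoid S] {e f : S}

theorem inv_inv_eq (a : S) : a⁻¹⁻¹ = a :=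
  (inv_unique a⁻¹ a (inv_mul_inv a) (mul_inv_mul a)).symm

theorem inv_eq_self (he : IsIdempotentElem e) : e⁻¹ = e :=
  (inv_unique e e (by rw [he.eq, he.eq]) (by rw [he.eq, he.eq])).symm

theorem mul_inv_mul_idem (he : IsIdempotentElem e) (hf : IsIdempotentElem f) :
    f * (e * f)⁻¹ * e = (e * f)⁻¹ := by
  refine inv_unique (e * f) _ ?_ ?_
  · calc e * f * (f * (e * f)⁻¹ * e) * (e * f)
        = e * (f * f) * (e * f)⁻¹ * (e * e) * f := by simp only [mul_assoc]
      _ = e * f * (e * f)⁻¹ * (e * f) := by simp only [he.eq, hf.eq, mul_assoc]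
      _ = e * f := mul_inv_mul _
  · calc f * (e * f)⁻¹ * e * (e * f) * (f * (e * f)⁻¹ * e)
        = f * (e * f)⁻¹ * (e * e) * (f * f) * (e * f)⁻¹ * e := by simp only [mul_assoc]
      _ = f * ((e * f)⁻¹ * (e * f) * (e * f)⁻¹) * e := by simp only [he.eq, hf.eq, mul_assoc]
      _ = f * (e * f)⁻¹ * e := by rw [inv_mul_inv]

theorem isIdempotentElem_mul (he : IsIdempotentElem e) (hf : IsIdempotentElem f) :
    IsIdempotentElem (e * f) := by
  have hinv : IsIdempotentElem (e * f)⁻¹ :=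
    calc (e * f)⁻¹ * (e * f)⁻¹
        = f * (e * f)⁻¹ * e * (f * (e * f)⁻¹ * e) := by rw [mul_inv_mul_idem he hf]
      _ = f * ((e * f)⁻¹ * (e * f) * (e * f)⁻¹) * e := by simp only [mul_assoc]
      _ = (e * f)⁻¹ := by rw [inv_mul_inv, mul_inv_mul_idem he hf]
  rw [← inv_inv_eq (e * f), inv_eq_self hinv]
  exact hinv

theorem commute_of_isIdempotentElem (he : IsIdempotentElem e) (hf : IsIdempotentElem f) :
    Commute e f := by
  have hef := isIdempotentElem_mul he hf
  have hfe := isIdempotentElem_mul hf he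
  have hinv : f * e = (e * f)⁻¹ := by
    refine inv_unique (e * f) (f * e) ?_ ?_
    · calc e * f * (f * e) * (e * f) = e * (f * f) * (e * e) * f := by simp only [mul_assoc]
        _ = e * f * (e * f) := by simp only [he.eq, hf.eq, mul_assoc]
        _ = e * f := hef
    · calc f * e * (e * f) * (f * e) = f * (e * e) * (f * f) * e := by simp only [mul_assoc]
        _ = f * e * (f * e) := by simp only [he.eq, hf.eq, mul_assoc]
        _ = f * e := hfe
  exact (hinv.trans (inv_eq_self hef)).symm

theorem eq_of_eq_mul_unit (he : IsIdempotentElem e) (hf : IsIdempotentElem f) {g : Sˣ}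
    (h : e = f * g) : e = f := by
  have hfe : f * e = e := by rw [h, ← mul_assoc, hf.eq]
  have hef : e * f = f := by
    rw [Units.eq_mul_inv_iff_mul_eq g |>.2 h.symm, ← mul_assoc, he.eq]
  rw [← hfe, ← (commute_of_isIdempotentElem he hf).eq, hef]

end InverseMonoid

section NaturalConnection

theorem mem_natconn {S : Type*} [Monoid S] {e : S} {g : Sˣ} : g ∈ natconn e ↔ e * g = e :=
  Iff.rfl

theorem natconn_one {S : Type*} [Monoid S] : natconn (1 : S) = ⊥ := by
  ext g
  simp [mem_natconn, Subgroup.mem_bot]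

theorem natconn_zero {S : Type*} [InverseMonoidWithZero S] : natconn (0 : S) = ⊤ := by
  ext g
  simp [mem_natconn, InverseMonoidWithZero.zero_mul]

theorem isIdempotentElem_zero {S : Type*} [InverseMonoidWithZero S] : IsIdempotentElem (0 : S) :=
  InverseMonoidWithZero.zero_mul 0

section Monoid

variable {S : Type*} [Monoid S] {e : S}

theorem isIdempotentElem_conj (he : IsIdempotentElem e) (g : Sˣ) :
    IsIdempotentElem (g * e * ↑g⁻¹ : S) := by
  simp only [IsIdempotentElem, mul_assoc, Units.inv_mul_cancel_left]
  rw [← mul_assoc e e, he.eq]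

theorem mem_natconn_conj {g h : Sˣ} :
    h ∈ natconn (g * e * ↑g⁻¹ : S) ↔ g⁻¹ * h * g ∈ natconn e := by
  rw [mem_natconn, mem_natconn, Units.eq_mul_inv_iff_mul_eq]
  simp only [Units.val_mul, mul_assoc, Units.mul_right_inj]

variable (hθ : NatconnDualIso S)

include hθ

theorem commute_unit_iff_mem_normalizer (he : IsIdempotentElem e) (g : Sˣ) :
    Commute e (g : S) ↔ g ∈ normalizer (natconn e : Set Sˣ) := by
  calc Commute e (g : S) ↔ (g * e * ↑g⁻¹ : S) = e := by
        rw [Units.mul_inv_eq_iff_eq_mul, eq_comm]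
        rfl
    _ ↔ natconn (g * e * ↑g⁻¹ : S) = natconn e :=
        ⟨congrArg natconn, hθ.1 _ _ (isIdempotentElem_conj he g) he⟩
    _ ↔ g ∈ normalizer (natconn e : Set Sˣ) := by
        simp only [SetLike.ext_iff, mem_natconn_conj, mem_normalizer_iff'', iff_comm]

theorem natLe_and_ne_iff_natconn_lt {f : S} (he : IsIdempotentElem e) (hf : IsIdempotentElem f) :
    NatLe e f ∧ e ≠ f ↔ natconn f < natconn e := by
  rw [hθ.2.1 e f he hf, lt_iff_le_and_ne]
  exact and_congr_right fun _ => not_congr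
    ⟨fun h => congrArg natconn h.symm, fun h => hθ.1 e f he hf h.symm⟩

theorem wellFoundedOn_natconn_lt_iff {X : Set S} (hX : ∀ e ∈ X, IsIdempotentElem e) :
    (natconn '' X).WellFoundedOn (· < ·) ↔ ¬ ∃ f : ℕ → S, (∀ k, f k ∈ X) ∧
      ∀ k, NatLe (f k) (f (k + 1)) ∧ f k ≠ f (k + 1) := by
  rw [Set.wellFoundedOn_image, wellFoundedOn_iff_not_exists_seq]
  refine not_congr (exists_congr fun f => and_congr_right fun hf => forall_congr' fun k => ?_)
  exact (natLe_and_ne_iff_natconn_lt hθ (hX _ (hf k)) (hX _ (hf (k + 1)))).symm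

theorem wellFoundedOn_natconn_gt_iff {X : Set S} (hX : ∀ e ∈ X, IsIdempotentElem e) :
    (natconn '' X).WellFoundedOn (· > ·) ↔ ¬ ∃ f : ℕ → S, (∀ k, f k ∈ X) ∧
      ∀ k, NatLe (f (k + 1)) (f k) ∧ f (k + 1) ≠ f k := by
  rw [Set.wellFoundedOn_image, wellFoundedOn_iff_not_exists_seq]
  refine not_congr (exists_congr fun f => and_congr_right fun hf => forall_congr' fun k => ?_)
  exact (natLe_and_ne_iff_natconn_lt hθ (hX _ (hf (k + 1))) (hX _ (hf k))).symm

/-- The image of the idempotents under the natural connection. -/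
def natconnSublattice : Sublattice (Subgroup Sˣ) where
  carrier := natconn '' {e : S | IsIdempotentElem e}
  supClosed' := by
    rintro _ ⟨e, he, rfl⟩ _ ⟨f, hf, rfl⟩
    exact (hθ.2.2 e f he hf).1
  infClosed' := by
    rintro _ ⟨e, he, rfl⟩ _ ⟨f, hf, rfl⟩
    exact (hθ.2.2 e f he hf).2

end Monoid

section Central

variable {S : Type*} [InverseMonoid S] (hfact : Factorizable S) (hθ : NatconnDualIso S) {c e : S}

include hfact

theorem exists_eq_mul_natconn_of_mem_upfilter {s : S} (he : IsIdempotentElem e)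
    (hs : s ∈ upfilter e) : ∃ f : S, ∃ g ∈ natconn e, IsIdempotentElem f ∧ s = f * g := by
  obtain ⟨f, _, hf, ⟨g, rfl⟩, rfl⟩ := hfact s
  obtain ⟨p, hp, hpe⟩ := hs
  rw [← mul_assoc] at hpe
  have hepf := InverseMonoid.eq_of_eq_mul_unit he (InverseMonoid.isIdempotentElem_mul hp hf) hpe
  rw [← hepf] at hpe
  exact ⟨f, g, mem_natconn.2 hpe.symm, hf, rfl⟩

include hθ

theorem centralIn_upfilter_iff (he : IsIdempotentElem e) (hc : IsIdempotentElem c) :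
    CentralIn (upfilter e) c ↔ NormalIn (natconn e) (natconn c) := by
  refine and_congr (hθ.2.1 e c he hc) ⟨fun h g hg => ?_, fun h s hs => ?_⟩
  · exact (commute_unit_iff_mem_normalizer hθ hc g).1 (h g ⟨e, he, (mem_natconn.1 hg).symm⟩)
  · obtain ⟨f, g, hg, hf, rfl⟩ := exists_eq_mul_natconn_of_mem_upfilter hfact he hs
    exact (InverseMonoid.commute_of_isIdempotentElem hc hf).mul_right
      ((commute_unit_iff_mem_normalizer hθ hc g).2 (h hg))

theorem centralIn_univ_iff (hc : IsIdempotentElem c) :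
    CentralIn Set.univ c ↔ (natconn c).Normal := by
  rw [← normalizer_eq_top_iff, eq_top_iff']
  refine ⟨fun h g => (commute_unit_iff_mem_normalizer hθ hc g).1 (h.2 g trivial),
    fun h => ⟨trivial, fun s _ => ?_⟩⟩
  obtain ⟨f, _, hf, ⟨g, rfl⟩, rfl⟩ := hfact s
  exact (InverseMonoid.commute_of_isIdempotentElem hc hf).mul_right
    ((commute_unit_iff_mem_normalizer hθ hc g).2 (h g))

end Central

end NaturalConnection

section IdemStep

/-- A step between idempotents whose images under the natural connection are related by `R`. -/
def IdemStep {S : Type*} [Monoid S] (R : Subgroup Sˣ → Subgroup Sˣ → Prop) (e f : S) : Prop :=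
  IsIdempotentElem e ∧ IsIdempotentElem f ∧ R (natconn e) (natconn f)

section Monoid

variable {S : Type*} [Monoid S] {R : Subgroup Sˣ → Subgroup Sˣ → Prop} {e f : S}

theorem map_idemStep_natconn (hθ : NatconnDualIso S) :
    Relation.Map (IdemStep (S := S) R) natconn natconn =
      fun A B => A ∈ natconnSublattice hθ ∧ B ∈ natconnSublattice hθ ∧ R A B := by
  ext A B
  constructor
  · rintro ⟨e, f, ⟨he, hf, hR⟩, rfl, rfl⟩
    exact ⟨⟨e, he, rfl⟩, ⟨f, hf, rfl⟩, hR⟩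
  · rintro ⟨⟨e, he, rfl⟩, ⟨f, hf, rfl⟩, hR⟩
    exact ⟨e, f, ⟨he, hf, hR⟩, rfl, rfl⟩

theorem isIdempotentElem_of_reflTransGen_idemStep (he : IsIdempotentElem e)
    (h : ReflTransGen (IdemStep R) e f) : IsIdempotentElem f := by
  rcases h.cases_tail with rfl | ⟨_, -, hstep⟩
  exacts [he, hstep.2.1]

theorem natconn_le_of_reflTransGen_idemStep (hR : IsNormalityRel R)
    (h : ReflTransGen (IdemStep R) e f) : natconn f ≤ natconn e := by
  induction h with
  | refl => exact le_rfl
  | tail _ hstep ih => exact (hR.le hstep.2.2).trans ih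

theorem isSeriesOf_idemStep_iff {n : ℕ} {c : ℕ → S} :
    IsSeriesOf (IdemStep R) e 1 n c ↔ c 0 = e ∧ c n = 1 ∧ (∀ i ≤ n, IsIdempotentElem (c i)) ∧
      ∀ i < n, R (natconn (c i)) (natconn (c (i + 1))) := by
  refine and_congr_right fun _ => and_congr_right fun hn => ⟨fun h => ⟨fun i hi => ?_,
    fun i hi => (h i hi).2.2⟩, fun ⟨hidem, h⟩ i hi => ⟨hidem i hi.le, hidem (i + 1) hi, h i hi⟩⟩
  rcases hi.eq_or_lt with rfl | hi
  · exact hn ▸ .one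
  · exact (h i hi).1

theorem reflTransGen_idemStep_antisymm (hθ : NatconnDualIso S) (hR : IsNormalityRel R)
    (e f : S) (hef : ReflTransGen (IdemStep R) e f)
    (hfe : ReflTransGen (IdemStep R) f e) : e = f := by
  rcases hef.cases_tail with rfl | ⟨_, -, hf⟩
  · rfl
  rcases hfe.cases_tail with rfl | ⟨_, -, he⟩
  · rfl
  exact hθ.1 e f he.2.1 hf.2.1 (le_antisymm
    (natconn_le_of_reflTransGen_idemStep hR hfe) (natconn_le_of_reflTransGen_idemStep hR hef))

end Monoid

section WithZero

variable {S : Type*} [InverseMonoidWithZero S] {R : Subgroup Sˣ → Subgroup Sˣ → Prop}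
  (hθ : NatconnDualIso S)

include hθ

theorem setOf_subnormal_map_idemStep :
    {A | Subnormal (Relation.Map (IdemStep (S := S) R) natconn natconn) A} =
      natconn '' {e : S | ReflTransGen (IdemStep R) 0 e} := by
  ext A
  change ReflTransGen _ ⊤ A ↔ _
  rw [← natconn_zero, reflTransGen_map_iff_of_injOn (X := {e : S | IsIdempotentElem e})
    (fun e he f hf => hθ.1 e f he hf) (fun _ _ h => ⟨h.1, h.2.1⟩) isIdempotentElem_zero]
  refine ⟨fun ⟨e, _, he, hA⟩ => ⟨e, he, hA⟩, fun ⟨e, he, hA⟩ => ⟨e, ?_, he, hA⟩⟩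
  exact isIdempotentElem_of_reflTransGen_idemStep isIdempotentElem_zero he

theorem reflTransGen_simpleStep_map_idemStep_iff :
    ReflTransGen (SimpleStep (Relation.Map (IdemStep (S := S) R) natconn natconn)) ⊤ ⊥ ↔
      ReflTransGen (SimpleStep (IdemStep (S := S) R)) 0 1 := by
  have hinj : {e : S | IsIdempotentElem e}.InjOn natconn := fun e he f hf => hθ.1 e f he hf
  rw [simpleStep_map_of_injOn hinj fun _ _ h => ⟨h.1, h.2.1⟩, ← natconn_zero, ← natconn_one,
    reflTransGen_map_iff_of_injOn hinj (fun _ _ h => ⟨h.1.1, h.1.2.1⟩) isIdempotentElem_zero]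
  refine ⟨fun ⟨e, he, h, heq⟩ => ?_, fun h => ⟨1, .one, h, rfl⟩⟩
  exact hinj he .one heq ▸ h

theorem exists_isCompositionOf_idemStep_iff (hR : IsNormalityRel R) :
    (∃ (n : ℕ) (c : ℕ → S), IsCompositionOf (IsSeriesOf (IdemStep R) 0 1) n c) ↔
      (¬ ∃ f : ℕ → S, (∀ k, ReflTransGen (IdemStep R) 0 (f k)) ∧
        ∀ k, NatLe (f k) (f (k + 1)) ∧ f k ≠ f (k + 1)) ∧
      (¬ ∃ f : ℕ → S, (∀ k, ReflTransGen (IdemStep R) 0 (f k)) ∧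
        ∀ k, NatLe (f (k + 1)) (f k) ∧ f (k + 1) ≠ f k) := by
  have hidem : ∀ e ∈ {e : S | ReflTransGen (IdemStep R) 0 e}, IsIdempotentElem e :=
    fun _ => isIdempotentElem_of_reflTransGen_idemStep isIdempotentElem_zero
  have hantisymm := reflTransGen_idemStep_antisymm hθ hR
  have hmid : ∀ a b c : S, IdemStep R a b → IdemStep R a c → ReflTransGen (IdemStep R) b c →
      IdemStep R b c := fun _ _ _ hab hac hbc => ⟨hab.2.1, hac.2.1,
    hR.of_le hab.2.2 hac.2.2 (natconn_le_of_reflTransGen_idemStep hR hbc)⟩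
  have hnormality : IsNormalityRel (Relation.Map (IdemStep (S := S) R) natconn natconn) := by
    rw [map_idemStep_natconn hθ]
    exact hR.restrict _ ⟨1, .one, natconn_one⟩ ⟨0, isIdempotentElem_zero, natconn_zero⟩
  rw [exists_isCompositionOf_isSeriesOf_iff hantisymm hmid,
    ← reflTransGen_simpleStep_map_idemStep_iff hθ, hnormality.reflTransGen_simpleStep_iff,
    setOf_subnormal_map_idemStep hθ]
  exact and_congr (wellFoundedOn_natconn_lt_iff hθ hidem) (wellFoundedOn_natconn_gt_iff hθ hidem)

variable (hfact : Factorizable S)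

include hfact

theorem isSubcentralSeries_eq :
    (IsSubcentralSeries : ℕ → (ℕ → S) → Prop) = IsSeriesOf (IdemStep NormalIn) 0 1 := by
  ext n c
  rw [isSeriesOf_idemStep_iff]
  refine and_congr_right fun _ => and_congr_right fun _ => and_congr_right fun hidem =>
    forall₂_congr fun i hi => ?_
  exact centralIn_upfilter_iff hfact hθ (hidem i hi.le) (hidem (i + 1) hi)

theorem isSubcentralIdem_iff {e : S} :
    IsSubcentralIdem e ↔ ReflTransGen (IdemStep NormalIn) 0 e := by
  rw [IsSubcentralIdem, isSubcentralSeries_eq hθ hfact, exists_isSeriesOf_through_iff]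
  refine and_iff_left_of_imp fun he => .single
    ⟨isIdempotentElem_of_reflTransGen_idemStep isIdempotentElem_zero he, .one, ?_⟩
  rw [natconn_one]
  exact ⟨bot_le, le_normalizer_of_normal⟩

theorem isCentralSeries_eq :
    (IsCentralSeries : ℕ → (ℕ → S) → Prop) = IsSeriesOf (IdemStep NormalBelow) 0 1 := by
  ext n c
  rw [isSeriesOf_idemStep_iff, IsCentralSeries, ← forall₂_and]
  refine and_congr_right fun _ => and_congr_right fun _ => and_congr_right fun hidem =>
    forall₂_congr fun i hi => ?_
  exact and_congr (hθ.2.1 _ _ (hidem i hi.le) (hidem (i + 1) hi))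
    (centralIn_univ_iff hfact hθ (hidem (i + 1) hi))

theorem isIdempotentElem_and_centralIn_univ_iff {e : S} :
    IsIdempotentElem e ∧ CentralIn Set.univ e ↔ ReflTransGen (IdemStep NormalBelow) 0 e := by
  constructor
  · rintro ⟨he, hcentral⟩
    refine .single ⟨isIdempotentElem_zero, he, ?_, (centralIn_univ_iff hfact hθ he).1 hcentral⟩
    exact natconn_zero (S := S) ▸ le_top
  · intro h
    have he := isIdempotentElem_of_reflTransGen_idemStep isIdempotentElem_zero h
    refine ⟨he, (centralIn_univ_iff hfact hθ he).2 ?_⟩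
    rcases h.cases_tail with rfl | ⟨_, -, hstep⟩
    · rw [natconn_zero]
      infer_instance
    · exact hstep.2.2.2

end WithZero

end IdemStep

/-- In a factorizable inverse monoid with zero whose natural connection
is a dual isomorphism onto a sublattice of the lattice of subgroups of the group of
units, `S` has a composition subcentral (resp. composition central) idempotent series
iff the poset `E_sc` of subcentral idempotents (resp. `E_c` of central idempotents)
satisfies the ascending and descending chain conditions. -/
theorem stmt_10 {S : Type*} [InverseMonoidWithZero S] (hfact : Factorizable S)
    (hθ : NatconnDualIso S) :
    ((∃ (n : ℕ) (c : ℕ → S), IsCompositionOf IsSubcentralSeries n c) ↔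
      ((¬ ∃ f : ℕ → S, (∀ k, IsSubcentralIdem (f k)) ∧
          ∀ k, NatLe (f k) (f (k + 1)) ∧ f k ≠ f (k + 1)) ∧
       (¬ ∃ f : ℕ → S, (∀ k, IsSubcentralIdem (f k)) ∧
          ∀ k, NatLe (f (k + 1)) (f k) ∧ f (k + 1) ≠ f k))) ∧
    ((∃ (n : ℕ) (c : ℕ → S), IsCompositionOf IsCentralSeries n c) ↔
      ((¬ ∃ f : ℕ → S, (∀ k, IsIdempotentElem (f k) ∧ CentralIn Set.univ (f k)) ∧
          ∀ k, NatLe (f k) (f (k + 1)) ∧ f k ≠ f (k + 1)) ∧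
       (¬ ∃ f : ℕ → S, (∀ k, IsIdempotentElem (f k) ∧ CentralIn Set.univ (f k)) ∧
          ∀ k, NatLe (f (k + 1)) (f k) ∧ f (k + 1) ≠ f k))) := by
  constructor
  · simpa only [isSubcentralSeries_eq hθ hfact, isSubcentralIdem_iff hθ hfact] using
      exists_isCompositionOf_idemStep_iff hθ isNormalityRel_normalIn
  · simpa only [isCentralSeries_eq hθ hfact, isIdempotentElem_and_centralIn_univ_iff hθ hfact]
      using exists_isCompositionOf_idemStep_iff hθ isNormalityRel_normalBelow
end

section
/- Let S be a G-nilpotent factorizable inverse monoid with zero whose natural connection θ is a dual isomorphism from the semilattice of idempotents E onto a sublattice of L(G), where G is the group of units, and let 0 = e₀ ≤ e₁ ≤ ⋯ ≤ eₙ = 1 be a G-nilpotent series of S. Then every idempotent in the interval [e_i, e_{i+1}] is central in S for every 0 ≤ i ≤ n−1; moreover, if e ∈ [e_i, e_{i+1}], then 0 = e₀ ≤ e₁ ≤ ⋯ ≤ e_i ≤ e ≤ e_{i+1} ≤ ⋯ ≤ eₙ = 1 is also a G-nilpotent series of S. -/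
/-!
If `f` is a central idempotent, then `F_{0,f} = fS` and `Z(fS) = fS ∩ Z(S)`, so the condition
`F_{e,f} ⊆ Z(F_{0,f})` says that every element of `F_{e,f}` is central in `S`. Any `x` with
`e ≤ x ≤ f` equals `f * x ∈ F_{e,f}`, so it is central; moreover `F_{e,x} = x * F_{e,f}` consists
of products of central elements, and if `x` is idempotent then `F_{x,f} ⊆ F_{e,f}`.
-/

section Insert

variable {α : Type*} {c : ℕ → α} {i n j : ℕ} {a : α}

/-- The sequence `c₀, …, cᵢ, a, cᵢ₊₁, …` obtained from `c` by inserting `a` right after the term of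
index `i`; it describes the refinement of a series by one term. -/
def insertAfter (c : ℕ → α) (i : ℕ) (a : α) : ℕ → α :=
  fun j => if j ≤ i then c j else if j = i + 1 then a else c (j - 1)

theorem insertAfter_of_le (h : j ≤ i) : insertAfter c i a j = c j :=
  if_pos h

theorem insertAfter_succ_self : insertAfter c i a (i + 1) = a := by
  simp [insertAfter]

theorem insertAfter_succ_of_lt (h : i < j) : insertAfter c i a (j + 1) = c j := by
  simp [insertAfter, h.ne', show ¬ j + 1 ≤ i by lia]

theorem forall_le_insertAfter {p : α → Prop} (hi : i ≤ n) (hc : ∀ j ≤ n, p (c j)) (ha : p a) :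
    ∀ j ≤ n + 1, p (insertAfter c i a j) := by
  intro j hj
  obtain hji | rfl | hij := lt_trichotomy j (i + 1)
  · rw [insertAfter_of_le (by lia)]
    exact hc j (by lia)
  · rwa [insertAfter_succ_self]
  · obtain ⟨k, rfl⟩ := Nat.exists_eq_add_one_of_ne_zero (by lia : j ≠ 0)
    rw [insertAfter_succ_of_lt (by lia)]
    exact hc k (by lia)

theorem forall_lt_rel_insertAfter {r : α → α → Prop} (hi : i ≤ n)
    (hc : ∀ j < n, r (c j) (c (j + 1))) (hia : r (c i) a) (hai : r a (c (i + 1))) :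
    ∀ j < n + 1, r (insertAfter c i a j) (insertAfter c i a (j + 1)) := by
  intro j hj
  obtain hji | rfl | hij := lt_trichotomy j i
  · rw [insertAfter_of_le hji.le, insertAfter_of_le hji]
    exact hc j (by lia)
  · rwa [insertAfter_of_le le_rfl, insertAfter_succ_self]
  · obtain ⟨k, rfl⟩ := Nat.exists_eq_add_one_of_ne_zero (by lia : j ≠ 0)
    rw [insertAfter_succ_of_lt hij]
    obtain rfl | hik := (Nat.lt_succ_iff.mp hij).eq_or_lt
    · rwa [insertAfter_succ_self]
    · rw [insertAfter_succ_of_lt hik]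
      exact hc k (by lia)

end Insert

section Monoid

variable {M : Type*} [Monoid M] {a e f : M}

theorem centralIn_univ_iff_s12 : CentralIn Set.univ a ↔ a ∈ Set.center M := by
  simp [CentralIn, Semigroup.mem_center_iff, eq_comm]

theorem NatLe.mul_eq_left (h : NatLe a e) (he : IsIdempotentElem e) : a * e = a := by
  obtain ⟨x, -, rfl⟩ := h
  rw [mul_assoc, he.eq]

theorem upfilter_subset_upfilter (ha : IsIdempotentElem a) (hac : a ∈ Set.center M)
    (he : IsIdempotentElem e) (hae : NatLe a e) : upfilter e ⊆ upfilter a := by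
  rintro t ⟨x, hx, rfl⟩
  refine ⟨a * x, ha.mul_of_commute (hac.comm x) hx, ?_⟩
  rw [mul_assoc, hae.mul_eq_left he]

theorem fef_subset_fef_left (ha : IsIdempotentElem a) (hac : a ∈ Set.center M)
    (he : IsIdempotentElem e) (hae : NatLe a e) : Fef e f ⊆ Fef a f :=
  Set.image_mono (upfilter_subset_upfilter ha hac he hae)

theorem mem_fef_of_natLe (hf : IsIdempotentElem f) (hfc : f ∈ Set.center M)
    (hae : NatLe a e) (hef : NatLe e f) : e ∈ Fef a f :=
  ⟨e, hae, (hfc.comm e).eq.trans (hef.mul_eq_left hf)⟩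

theorem fef_subset_center_right (hf : IsIdempotentElem f) (hec : e ∈ Set.center M)
    (hef : NatLe e f) (haf : Fef a f ⊆ Set.center M) : Fef a e ⊆ Set.center M := by
  rintro _ ⟨t, hat, rfl⟩
  have hmul : e * (f * t) = e * t := by rw [← mul_assoc, hef.mul_eq_left hf]
  exact Set.mem_of_eq_of_mem hmul.symm (Set.mul_mem_center hec (haf ⟨t, hat, rfl⟩))

end Monoid

section MonoidWithZero

variable {M : Type*} [MonoidWithZero M] {e f : M}

theorem upfilter_zero : upfilter (0 : M) = Set.univ :=
  Set.eq_univ_of_forall fun s => ⟨0, .zero, (zero_mul s).symm⟩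

theorem fef_zero_left : Fef 0 f = Set.range (f * ·) := by
  rw [Fef, upfilter_zero, Set.image_univ]

theorem fef_subset_fef_zero : Fef e f ⊆ Fef 0 f :=
  fef_zero_left (f := f) ▸ Set.image_subset_range _ _

theorem zIn_fef_zero (hf : IsIdempotentElem f) (hfc : f ∈ Set.center M) :
    ZIn (Fef 0 f) = Fef 0 f ∩ Set.center M := by
  ext x
  refine and_congr_right fun hx => ⟨fun hcomm => ?_, fun hxc y _ => (hxc.comm y).eq⟩
  rw [fef_zero_left] at hx hcomm
  obtain ⟨t, rfl⟩ := hx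
  refine Semigroup.mem_center_iff.mpr fun s => ?_
  calc s * (f * t) = f * s * (f * t) := by
        rw [(hfc.comm s).eq, mul_assoc, ← mul_assoc f f t, hf.eq]
    _ = f * t * (f * s) := (hcomm _ ⟨s, rfl⟩).symm
    _ = f * t * s := by
        rw [(hfc.comm t).eq, mul_assoc, ← mul_assoc f f s, hf.eq, ← mul_assoc]

theorem fef_subset_zIn_iff (hf : IsIdempotentElem f) (hfc : f ∈ Set.center M) :
    Fef e f ⊆ ZIn (Fef 0 f) ↔ Fef e f ⊆ Set.center M := by
  rw [zIn_fef_zero hf hfc, Set.subset_inter_iff, and_iff_right fef_subset_fef_zero]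

theorem gNilpotentSeries_iff {n : ℕ} {c : ℕ → M} :
    GNilpotentSeries n c ↔ c 0 = 0 ∧ c n = 1 ∧
      (∀ i ≤ n, IsIdempotentElem (c i) ∧ c i ∈ Set.center M) ∧
      (∀ i < n, NatLe (c i) (c (i + 1))) ∧
      ∀ i < n, Fef (c i) (c (i + 1)) ⊆ Set.center M := by
  simp only [GNilpotentSeries, centralIn_univ_iff_s12]
  refine and_congr_right' <| and_congr_right' <| and_congr_right fun hc =>
    and_congr_right' <| forall₂_congr fun i hi => ?_
  obtain ⟨hidem, hcenter⟩ := hc (i + 1) hi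
  exact fef_subset_zIn_iff hidem hcenter

theorem GNilpotentSeries.mem_center_of_natLe {n i : ℕ} {c : ℕ → M} (hΓ : GNilpotentSeries n c)
    (hi : i < n) (hie : NatLe (c i) e) (hei : NatLe e (c (i + 1))) : e ∈ Set.center M := by
  obtain ⟨-, -, hc, -, hF⟩ := gNilpotentSeries_iff.mp hΓ
  obtain ⟨hf, hfc⟩ := hc (i + 1) hi
  exact hF i hi (mem_fef_of_natLe hf hfc hie hei)

theorem GNilpotentSeries.insertAfter {n i : ℕ} {c : ℕ → M} (hΓ : GNilpotentSeries n c)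
    (hi : i < n) (he : IsIdempotentElem e) (hie : NatLe (c i) e) (hei : NatLe e (c (i + 1))) :
    GNilpotentSeries (n + 1) (insertAfter c i e) := by
  have hec : e ∈ Set.center M := hΓ.mem_center_of_natLe hi hie hei
  rw [gNilpotentSeries_iff] at hΓ ⊢
  obtain ⟨hzero, hone, hc, hle, hF⟩ := hΓ
  obtain ⟨ha, hac⟩ := hc i hi.le
  obtain ⟨hf, -⟩ := hc (i + 1) hi
  have hF_left : Fef (c i) e ⊆ Set.center M := fef_subset_center_right hf hec hei (hF i hi)
  have hF_right : Fef e (c (i + 1)) ⊆ Set.center M :=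
    (fef_subset_fef_left ha hac he hie).trans (hF i hi)
  exact ⟨(insertAfter_of_le i.zero_le).trans hzero, (insertAfter_succ_of_lt hi).trans hone,
    forall_le_insertAfter (p := fun x => IsIdempotentElem x ∧ x ∈ Set.center M) hi.le hc ⟨he, hec⟩,
    forall_lt_rel_insertAfter hi.le hle hie hei,
    forall_lt_rel_insertAfter (r := fun x y => Fef x y ⊆ Set.center M) hi.le hF hF_left hF_right⟩

end MonoidWithZero

theorem stmt_12_general {M : Type*} [MonoidWithZero M] (n : ℕ) (c : ℕ → M)
    (hΓ : GNilpotentSeries n c) :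
    ∀ i < n, ∀ e : M, IsIdempotentElem e → NatLe (c i) e → NatLe e (c (i + 1)) →
      CentralIn Set.univ e ∧ GNilpotentSeries (n + 1) (insertAfter c i e) := by
  intro i hi e he hie hei
  exact ⟨centralIn_univ_iff_s12.mpr (hΓ.mem_center_of_natLe hi hie hei), hΓ.insertAfter hi he hie hei⟩

/-- An inverse monoid with zero, viewed as a monoid with zero. It is not an instance, so that the
monoid structure of an `InverseMonoidWithZero` is found in only one way. -/
abbrev InverseMonoidWithZero.toMonoidWithZero (S : Type*) [InverseMonoidWithZero S] :
    MonoidWithZero S where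
  zero_mul := InverseMonoidWithZero.zero_mul
  mul_zero := InverseMonoidWithZero.mul_zero

/-- If `0 = e₀ ≤ ⋯ ≤ eₙ = 1` is a `G`-nilpotent series of a `G`-nilpotent
factorizable inverse monoid with zero whose natural connection is a dual isomorphism
onto a sublattice of the lattice of subgroups of the group of units, then every
idempotent in the interval `[eᵢ, eᵢ₊₁]` is central in `S`, and inserting such an
idempotent yields again a `G`-nilpotent series. -/
theorem stmt_12 {S : Type*} [InverseMonoidWithZero S] (hfact : Factorizable S)
    (hθ : NatconnDualIso S) (n : ℕ) (c : ℕ → S) (hΓ : GNilpotentSeries n c) :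
    ∀ i < n, ∀ e : S, IsIdempotentElem e → NatLe (c i) e → NatLe e (c (i + 1)) →
      CentralIn Set.univ e ∧
      GNilpotentSeries (n + 1)
        (fun j => if j ≤ i then c j else if j = i + 1 then e else c (j - 1)) := by
  let _ := InverseMonoidWithZero.toMonoidWithZero S
  exact stmt_12_general n c hΓ
end
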